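/- Let 0 < α < 1, 1 < β < 2, p, q > 0, m ≥ 1 an integer, μ = (2mπ)², and suppose Δ_m := p^β E_{β,β+1}(−μ p^β) + p E_{β,2}(−μ p^β) − q^α E_{α,α+1}(−μ q^α) = 0. Let c ≠ 0 and set f₂ = c E_{α,1}(−μ q^α), a = −c q^α E_{α,α+1}(−μ q^α). Define V(t) = a E_{α,1}(−μ t^α) + f₂ t^α E_{α,α+1}(−μ t^α) for 0 ≤ t ≤ q and W(t) = a E_{β,1}(−μ(−t)^β) − t c E_{β,2}(−μ(−t)^β) + f₂ (−t)^β E_{β,β+1}(−μ(−t)^β) for −p ≤ t ≤ 0. Then: (i) (D^α V)(t) + μ V(t) = f₂ for t ∈ (0,q); (ii) (D_{t0}^β W)(t) + μ W(t) = f₂ for t ∈ (−p,0); (iii) V(0) = W(0); (iv) V(q) = 0 and W(−p) = 0; (v) lim_{t→0+} (D^α V)(t) = lim_{t→0−} dW/d(−t)(t) = c. Hence the m-th sine-mode transmission problem has a nontrivial solution when Δ_m = 0. -/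

import Mathlib

open MeasureTheory Real

/-- The two-parameter Mittag-Leffler function `E_{a,b}(z) = ∑_{j=0}^∞ z^j / Γ(a j + b)`. -/
noncomputable def mittagLeffler (a b z : ℝ) : ℝ := ∑' j : ℕ, z ^ j / Real.Gamma (a * j + b)

/-!
For `μ = -l` the transmission problem decouples into two linear Cauchy problems `D^r w = l w + f₂`
of Caputo type, forward in time for `V` and, after the reflection `t ↦ -t`, also for `W`. The
solution with initial data `c₀, …, c₍ₙ₋₁₎` is
`w t = ∑ k, c_k t ^ k E_{r,k+1}(l t ^ r) + f₂ t ^ r E_{r,r+1}(l t ^ r)`. All its terms are of the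
form `t ^ (b - 1) E_{a,b}(l t ^ a)`; on this family differentiation is the shift `b ↦ b - 1`,
fractional integration of order `s` is the shift `b ↦ b + s`, and
`t ^ (b - 1) E_{a,b}(l t ^ a) = t ^ (b - 1) / Γ(b) + l t ^ (a + b - 1) E_{a,a+b}(l t ^ a)`.
The rest is the linear algebra of the data: `f₂ - μ a = c` gives the common flux, and `Δ = 0` is the
condition for `W` to vanish at `-p`.
-/

open Filter Set Topology

section Gamma

theorem exp_neg_mul_rpow_le_Gamma {M s : ℝ} (hM : 0 < M) (hs : 1 ≤ s) :
    exp (-M) * M ^ (s - 1) ≤ Gamma s := by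
  have hs0 : 0 < s := by linarith
  have hint := GammaIntegral_convergent hs0
  have hsub : Ioi M ⊆ Ioi 0 := Ioi_subset_Ioi hM.le
  rw [Gamma_eq_integral hs0, ← integral_exp_neg_Ioi M, ← integral_mul_const]
  calc ∫ x in Ioi M, exp (-x) * M ^ (s - 1)
      ≤ ∫ x in Ioi M, exp (-x) * x ^ (s - 1) := by
        refine setIntegral_mono_on ((integrableOn_exp_neg_Ioi M).mul_const _)
          (hint.mono_set hsub) measurableSet_Ioi fun x hx => ?_
        have hMx : M < x := hx
        gcongr
    _ ≤ ∫ x in Ioi 0, exp (-x) * x ^ (s - 1) := by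
        refine setIntegral_mono_set hint ?_ hsub.eventuallyLE
        filter_upwards [ae_restrict_mem measurableSet_Ioi] with x hx
        exact mul_nonneg (exp_nonneg _) (rpow_nonneg (le_of_lt hx) _)

-- `Γ` takes the junk value `0` at its poles, so `1 / Γ` is the entire reciprocal Gamma function and
-- the recurrence has no exceptional points.
theorem div_Gamma_eq_inv_Gamma_sub_one (s : ℝ) : (s - 1) / Gamma s = (Gamma (s - 1))⁻¹ := by
  rcases eq_or_ne (s - 1) 0 with hs | hs
  · simp [hs]
  · have hΓ := Gamma_add_one hs
    rw [sub_add_cancel] at hΓ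
    rw [hΓ, div_mul_eq_div_div, div_self hs, one_div]

theorem Gamma_natCast_add_one_sub_natCast {k n : ℕ} (h : k < n) :
    Gamma ((k : ℝ) + 1 - n) = 0 := by
  obtain ⟨d, rfl⟩ := Nat.exists_eq_add_of_lt h
  rw [show (k : ℝ) + 1 - (k + d + 1 : ℕ) = -d by push_cast; ring, Gamma_neg_nat_eq_zero]

theorem hasDerivAt_rpow_div_Gamma (b : ℝ) {t : ℝ} (ht : t ≠ 0) :
    HasDerivAt (fun x => x ^ (b - 1) / Gamma b) (t ^ (b - 1 - 1) / Gamma (b - 1)) t := by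
  refine ((hasDerivAt_rpow_const (.inl ht)).div_const (Gamma b)).congr_deriv ?_
  rw [div_eq_mul_inv (t ^ _), ← div_Gamma_eq_inv_Gamma_sub_one]
  ring

end Gamma

section MittagLeffler

variable {a : ℝ}

theorem summable_mittagLeffler (ha : 0 < a) (b z : ℝ) :
    Summable fun j : ℕ => z ^ j / Gamma (a * j + b) := by
  obtain ⟨M, hM, hMz⟩ : ∃ M : ℝ, 0 < M ∧ |z| < M ^ a :=
    ((eventually_gt_atTop 0).and ((tendsto_rpow_atTop ha).eventually_gt_atTop |z|)).exists
  have hgeo : Summable fun j : ℕ => exp M * M ^ (1 - b) * (|z| / M ^ a) ^ j :=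
    (summable_geometric_of_lt_one (by positivity)
      ((div_lt_one (rpow_pos_of_pos hM a)).2 hMz)).mul_left _
  have hlarge : ∀ᶠ j : ℕ in atTop, 1 - b ≤ a * j :=
    (tendsto_natCast_atTop_atTop.const_mul_atTop ha).eventually_ge_atTop _
  refine hgeo.of_norm_bounded_eventually_nat ?_
  filter_upwards [hlarge] with j hj
  have hΓ : exp (-M) * M ^ (a * j + b - 1) ≤ Gamma (a * j + b) :=
    exp_neg_mul_rpow_le_Gamma hM (by linarith)
  have hpow : M ^ (a * j + b - 1) = (M ^ a) ^ j / M ^ (1 - b) := by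
    rw [← rpow_natCast, ← rpow_mul hM.le, ← rpow_sub hM]
    ring_nf
  calc ‖z ^ j / Gamma (a * j + b)‖ = |z| ^ j / Gamma (a * j + b) := by
        rw [norm_div, norm_pow, norm_eq_abs, norm_of_nonneg (Gamma_nonneg_of_nonneg (by linarith))]
    _ ≤ |z| ^ j / (exp (-M) * M ^ (a * j + b - 1)) := by gcongr
    _ = exp M * M ^ (1 - b) * (|z| / M ^ a) ^ j := by
        rw [hpow, exp_neg, div_pow]
        field_simp

theorem continuous_mittagLeffler (ha : 0 < a) (b : ℝ) : Continuous (mittagLeffler a b) := by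
  refine continuous_iff_continuousAt.2 fun x => ?_
  have hcont : ContinuousOn (mittagLeffler a b) (Metric.closedBall 0 (|x| + 1)) := by
    refine continuousOn_tsum (fun j => by fun_prop)
      (summable_mittagLeffler ha b (|x| + 1)).norm fun j z hz => ?_
    rw [mem_closedBall_zero_iff] at hz
    rw [norm_div, norm_div, norm_pow, norm_pow]
    gcongr
    exact hz.trans (le_abs_self _)
  exact hcont.continuousAt (Metric.closedBall_mem_nhds_of_mem (by simp))

theorem mittagLeffler_zero (a b : ℝ) : mittagLeffler a b 0 = (Gamma b)⁻¹ := by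
  rw [mittagLeffler, tsum_eq_single 0 fun j hj => by simp [hj]]
  simp

theorem mittagLeffler_eq_add (ha : 0 < a) (b z : ℝ) :
    mittagLeffler a b z = (Gamma b)⁻¹ + z * mittagLeffler a (a + b) z := by
  rw [mittagLeffler, (summable_mittagLeffler ha b z).tsum_eq_zero_add, mittagLeffler,
    ← tsum_mul_left]
  congr 1
  · simp
  · refine tsum_congr fun j => ?_
    rw [Nat.cast_succ, show a * (j + 1) + b = a * j + (a + b) by ring, pow_succ', mul_div_assoc]

theorem mittagLeffler_one (ha : 0 < a) (z : ℝ) :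
    mittagLeffler a 1 z = 1 + z * mittagLeffler a (a + 1) z := by
  rw [mittagLeffler_eq_add ha, Gamma_one, inv_one]

end MittagLeffler

section RiemannLiouville

/-- The Riemann–Liouville fractional integral of order `s > 0` based at `0`. -/
noncomputable def riemannLiouvilleIntegral (s : ℝ) (g : ℝ → ℝ) (t : ℝ) : ℝ :=
  1 / Gamma s * ∫ z in (0 : ℝ)..t, g z * (t - z) ^ (s - 1)

variable {r s t : ℝ}

theorem riemannLiouvilleIntegral_congr {f g : ℝ → ℝ} (ht : 0 < t) (h : EqOn f g (Ioo 0 t)) :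
    riemannLiouvilleIntegral s f t = riemannLiouvilleIntegral s g t := by
  simp only [riemannLiouvilleIntegral, intervalIntegral.integral_of_le ht.le,
    integral_Ioc_eq_integral_Ioo]
  congr 1
  exact setIntegral_congr_fun measurableSet_Ioo fun z hz => by simp only [h hz]

theorem riemannLiouvilleIntegral_const_mul (c : ℝ) (g : ℝ → ℝ) :
    riemannLiouvilleIntegral s (fun z => c * g z) t = c * riemannLiouvilleIntegral s g t := by
  simp only [riemannLiouvilleIntegral, mul_assoc, intervalIntegral.integral_const_mul]
  ring

theorem riemannLiouvilleIntegral_add {f g : ℝ → ℝ}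
    (hf : IntervalIntegrable (fun z => f z * (t - z) ^ (s - 1)) volume 0 t)
    (hg : IntervalIntegrable (fun z => g z * (t - z) ^ (s - 1)) volume 0 t) :
    riemannLiouvilleIntegral s (fun z => f z + g z) t =
      riemannLiouvilleIntegral s f t + riemannLiouvilleIntegral s g t := by
  simp only [riemannLiouvilleIntegral, add_mul, intervalIntegral.integral_add hf hg, mul_add]

theorem riemannLiouvilleIntegral_sum {ι : Type*} {S : Finset ι} {g : ι → ℝ → ℝ}
    (hg : ∀ i ∈ S, IntervalIntegrable (fun z => g i z * (t - z) ^ (s - 1)) volume 0 t) :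
    riemannLiouvilleIntegral s (fun z => ∑ i ∈ S, g i z) t =
      ∑ i ∈ S, riemannLiouvilleIntegral s (g i) t := by
  simp only [riemannLiouvilleIntegral, Finset.sum_mul, intervalIntegral.integral_finsetSum hg,
    Finset.mul_sum]

theorem integral_rpow_mul_sub_rpow (hr : 0 < r) (hs : 0 < s) (ht : 0 < t) :
    ∫ z in (0 : ℝ)..t, z ^ (r - 1) * (t - z) ^ (s - 1) =
      t ^ (r + s - 1) * (Gamma r * Gamma s / Gamma (r + s)) := by
  have h := Complex.betaIntegral_scaled (r : ℂ) s ht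
  rw [Complex.betaIntegral_eq_Gamma_mul_div _ _ (by simpa) (by simpa)] at h
  rw [← Complex.ofReal_inj, ← intervalIntegral.integral_ofReal]
  push_cast [Complex.ofReal_cpow ht.le, ← Complex.Gamma_ofReal] at h ⊢
  rw [← h]
  refine intervalIntegral.integral_congr fun z hz => ?_
  rw [uIcc_of_le ht.le] at hz
  push_cast [Complex.ofReal_cpow hz.1, Complex.ofReal_cpow (sub_nonneg.2 hz.2)]
  rfl

theorem intervalIntegrable_rpow_mul_sub_rpow (hr : 0 < r) (hs : 0 < s) (ht : 0 < t) :
    IntervalIntegrable (fun z => z ^ (r - 1) * (t - z) ^ (s - 1)) volume 0 t := by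
  -- A non-integrable function would have integral `0`, but the Beta integral is positive.
  by_contra hcon
  have h := integral_rpow_mul_sub_rpow hr hs ht
  rw [intervalIntegral.integral_undef hcon] at h
  exact h.not_lt (mul_pos (rpow_pos_of_pos ht _) (ProbabilityTheory.beta_pos hr hs))

end RiemannLiouville

section Kernel

/-- The function `t ^ (b - 1) * E_{a,b}(l * t ^ a)`. It is normalised so that differentiation and
fractional integration act on it by shifting the parameter `b`. -/
noncomputable def mittagLefflerKernel (a b l t : ℝ) : ℝ :=
  t ^ (b - 1) * mittagLeffler a b (l * t ^ a)

variable {a b s t : ℝ}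

theorem mittagLefflerKernel_apply_zero (ha : a ≠ 0) (b l : ℝ) :
    mittagLefflerKernel a b l 0 = if b = 1 then 1 else 0 := by
  rw [mittagLefflerKernel, zero_rpow ha, mul_zero, mittagLeffler_zero]
  split_ifs with hb
  · simp [hb]
  · rw [zero_rpow (sub_ne_zero.2 hb), zero_mul]

theorem mittagLefflerKernel_eq_add (ha : 0 < a) (b l : ℝ) (ht : 0 < t) :
    mittagLefflerKernel a b l t =
      t ^ (b - 1) / Gamma b + l * mittagLefflerKernel a (a + b) l t := by
  rw [mittagLefflerKernel, mittagLefflerKernel, mittagLeffler_eq_add ha,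
    show a + b - 1 = b - 1 + a by ring, rpow_add ht]
  ring

theorem mittagLefflerKernel_one (ha : 0 < a) (l : ℝ) (ht : 0 < t) :
    mittagLefflerKernel a 1 l t = 1 + l * mittagLefflerKernel a (a + 1) l t := by
  simp [mittagLefflerKernel_eq_add ha 1 l ht]

theorem mittagLefflerKernel_of_Gamma_eq_zero (ha : 0 < a) (hb : Gamma b = 0) (l : ℝ)
    (ht : 0 < t) :
    mittagLefflerKernel a b l t = l * mittagLefflerKernel a (a + b) l t := by
  rw [mittagLefflerKernel_eq_add ha b l ht, hb, div_zero, zero_add]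

theorem hasSum_mittagLefflerKernel (ha : 0 < a) (b l : ℝ) (ht : 0 < t) :
    HasSum (fun j : ℕ => l ^ j * (t ^ (a * j + b - 1) / Gamma (a * j + b)))
      (mittagLefflerKernel a b l t) := by
  have h := (summable_mittagLeffler ha b (l * t ^ a)).hasSum.mul_left (t ^ (b - 1))
  refine h.congr_fun fun j => ?_
  rw [mul_pow, ← rpow_natCast (t ^ a), ← rpow_mul ht.le, add_sub_assoc, rpow_add ht]
  ring

theorem continuous_mittagLeffler_mul_rpow (ha : 0 < a) (b l : ℝ) :
    Continuous fun t : ℝ => mittagLeffler a b (l * t ^ a) :=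
  (continuous_mittagLeffler ha b).comp
    (continuous_const.mul (continuous_id.rpow_const fun _ => .inr ha.le))

theorem continuous_mittagLefflerKernel (ha : 0 < a) (hb : 1 ≤ b) (l : ℝ) :
    Continuous (mittagLefflerKernel a b l) :=
  (continuous_id.rpow_const fun _ => .inr (sub_nonneg.2 hb)).mul
    (continuous_mittagLeffler_mul_rpow ha b l)

theorem continuousAt_mittagLefflerKernel (ha : 0 < a) (b l : ℝ) (ht : t ≠ 0) :
    ContinuousAt (mittagLefflerKernel a b l) t :=
  (continuousAt_rpow_const _ _ (.inl ht)).mul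
    (continuous_mittagLeffler_mul_rpow ha b l).continuousAt

theorem tendsto_mittagLefflerKernel_zero (ha : 0 < a) (hb : 1 ≤ b) (l : ℝ) :
    Tendsto (mittagLefflerKernel a b l) (𝓝[>] 0) (𝓝 (if b = 1 then 1 else 0)) := by
  rw [← mittagLefflerKernel_apply_zero ha.ne' b l]
  exact (continuous_mittagLefflerKernel ha hb l).continuousWithinAt

theorem intervalIntegrable_mittagLefflerKernel_mul_sub_rpow (ha : 0 < a) (hb : 0 < b) (hs : 0 < s)
    (l : ℝ) (ht : 0 < t) :
    IntervalIntegrable (fun z => mittagLefflerKernel a b l z * (t - z) ^ (s - 1)) volume 0 t := by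
  refine ((intervalIntegrable_rpow_mul_sub_rpow hb hs ht).mul_continuousOn
    (continuous_mittagLeffler_mul_rpow ha b l).continuousOn).congr fun z _ => ?_
  simp only [mittagLefflerKernel]
  ring

theorem integral_mittagLefflerKernel_mul_sub_rpow (ha : 0 < a) (hb : 0 < b) (hs : 0 < s) (l : ℝ)
    (ht : 0 < t) :
    ∫ z in (0 : ℝ)..t, mittagLefflerKernel a b l z * (t - z) ^ (s - 1) =
      Gamma s * mittagLefflerKernel a (b + s) l t := by
  let F (c : ℝ) (j : ℕ) (z : ℝ) : ℝ :=
    c ^ j / Gamma (a * j + b) * (z ^ (a * j + b - 1) * (t - z) ^ (s - 1))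
  have hpos (j : ℕ) : 0 < a * j + b := by positivity
  have hF (c : ℝ) (j : ℕ) : ∫ z in Ioc 0 t, F c j z =
      Gamma s * (c ^ j * (t ^ (a * j + (b + s) - 1) / Gamma (a * j + (b + s)))) := by
    have hΓ := (Gamma_pos_of_pos (hpos j)).ne'
    rw [integral_const_mul, ← intervalIntegral.integral_of_le ht.le,
      integral_rpow_mul_sub_rpow (hpos j) hs ht, ← add_assoc]
    field_simp
  have hF_int (j : ℕ) : Integrable (F l j) (volume.restrict (Ioc 0 t)) :=
    (intervalIntegrable_rpow_mul_sub_rpow (hpos j) hs ht).1.const_mul _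
  have hF_norm (j : ℕ) : ∫ z in Ioc 0 t, ‖F l j z‖ = ∫ z in Ioc 0 t, F |l| j z := by
    refine setIntegral_congr_fun measurableSet_Ioc fun z hz => ?_
    have hz₁ := rpow_nonneg hz.1.le (a * j + b - 1)
    have hz₂ := rpow_nonneg (sub_nonneg.2 hz.2) (s - 1)
    simp [F, abs_of_nonneg hz₁, abs_of_nonneg hz₂, abs_of_pos (Gamma_pos_of_pos (hpos j))]
  have hF_summable : Summable fun j => ∫ z in Ioc 0 t, ‖F l j z‖ := by
    simp_rw [hF_norm, hF]
    exact (hasSum_mittagLefflerKernel ha (b + s) |l| ht).summable.mul_left _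
  have hF_tsum {z : ℝ} (hz : z ∈ Ioc 0 t) :
      mittagLefflerKernel a b l z * (t - z) ^ (s - 1) = ∑' j, F l j z := by
    rw [← ((hasSum_mittagLefflerKernel ha b l hz.1).mul_right _).tsum_eq]
    exact tsum_congr fun j => by simp only [F]; ring
  rw [intervalIntegral.integral_of_le ht.le,
    setIntegral_congr_fun measurableSet_Ioc fun z hz => hF_tsum hz,
    ← integral_tsum_of_summable_integral_norm hF_int hF_summable]
  simp_rw [hF]
  exact ((hasSum_mittagLefflerKernel ha (b + s) l ht).mul_left _).tsum_eq

theorem riemannLiouvilleIntegral_mittagLefflerKernel (ha : 0 < a) (hb : 0 < b) (hs : 0 < s) (l : ℝ)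
    (ht : 0 < t) :
    riemannLiouvilleIntegral s (mittagLefflerKernel a b l) t =
      mittagLefflerKernel a (b + s) l t := by
  rw [riemannLiouvilleIntegral, integral_mittagLefflerKernel_mul_sub_rpow ha hb hs l ht,
    ← mul_assoc, one_div_mul_cancel (Gamma_pos_of_pos hs).ne', one_mul]

theorem hasDerivAt_mittagLefflerKernel_of_one_lt (ha : 0 < a) (hb : 1 < b) (l : ℝ) (ht : 0 < t) :
    HasDerivAt (mittagLefflerKernel a b l) (mittagLefflerKernel a (b - 1) l t) t := by
  have hb₀ : 0 < b - 1 := sub_pos.2 hb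
  have hprim {x : ℝ} (hx : 0 < x) :
      ∫ z in (0 : ℝ)..x, mittagLefflerKernel a (b - 1) l z = mittagLefflerKernel a b l x := by
    simpa using integral_mittagLefflerKernel_mul_sub_rpow ha hb₀ one_pos l hx
  have hint : IntervalIntegrable (mittagLefflerKernel a (b - 1) l) volume 0 t := by
    simpa using intervalIntegrable_mittagLefflerKernel_mul_sub_rpow ha hb₀ one_pos l ht
  have hcont : ContinuousOn (mittagLefflerKernel a (b - 1) l) (Ioi 0) := fun x hx =>
    (continuousAt_mittagLefflerKernel ha _ l (ne_of_gt hx)).continuousWithinAt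
  refine (intervalIntegral.integral_hasDerivAt_right hint
    (hcont.stronglyMeasurableAtFilter isOpen_Ioi t ht)
    (continuousAt_mittagLefflerKernel ha _ l ht.ne')).congr_of_eventuallyEq ?_
  filter_upwards [lt_mem_nhds ht] with x hx using (hprim hx).symm

theorem hasDerivAt_mittagLefflerKernel (ha : 0 < a) (b l : ℝ) (ht : 0 < t) :
    HasDerivAt (mittagLefflerKernel a b l) (mittagLefflerKernel a (b - 1) l t) t := by
  -- The recurrence trades `b` for `a + b`; iterate it until the index exceeds `1`.
  obtain ⟨N, hN⟩ : ∃ N : ℕ, 1 < N * a + b := by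
    obtain ⟨N, hN⟩ := exists_nat_gt ((1 - b) / a)
    exact ⟨N, by linarith [(div_lt_iff₀ ha).1 hN]⟩
  induction N generalizing b with
  | zero => exact hasDerivAt_mittagLefflerKernel_of_one_lt ha (by simpa using hN) l ht
  | succ N ih =>
    have hshift := ih (a + b) (by push_cast at hN; linarith)
    refine (((hasDerivAt_rpow_div_Gamma b ht.ne').add (hshift.const_mul l)).congr_of_eventuallyEq
      ?_).congr_deriv ?_
    · filter_upwards [lt_mem_nhds ht] with x hx using mittagLefflerKernel_eq_add ha b l hx
    · rw [mittagLefflerKernel_eq_add ha (b - 1) l ht, add_sub_assoc]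

end Kernel

section Caputo

/-- The Caputo derivative of order `r` based at `0`, for `n - 1 < r < n`. The integer `n = ⌈r⌉` is
an explicit argument. -/
noncomputable def caputoDeriv (n : ℕ) (r : ℝ) (g : ℝ → ℝ) : ℝ → ℝ :=
  riemannLiouvilleIntegral (n - r) (iteratedDeriv n g)

variable {n : ℕ} {r t : ℝ}

theorem caputoDeriv_congr {f g : ℝ → ℝ} (ht : 0 < t) (h : EqOn f g (Ioo 0 t)) :
    caputoDeriv n r f t = caputoDeriv n r g t :=
  riemannLiouvilleIntegral_congr ht (h.iteratedDeriv_of_isOpen isOpen_Ioo n)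

theorem caputoDeriv_one (r : ℝ) (g : ℝ → ℝ) (t : ℝ) :
    caputoDeriv 1 r g t =
      1 / Gamma (1 - r) * ∫ z in (0 : ℝ)..t, deriv g z * (t - z) ^ (-r) := by
  rw [caputoDeriv, riemannLiouvilleIntegral, iteratedDeriv_one, Nat.cast_one, sub_sub_cancel_left]

theorem caputoDeriv_comp_neg (n : ℕ) (r : ℝ) (g : ℝ → ℝ) (t : ℝ) :
    caputoDeriv n r (fun x => g (-x)) (-t) =
      1 / Gamma (n - r) *
        ∫ z in t..(0 : ℝ), (-1) ^ n * iteratedDeriv n g z * (z - t) ^ (n - r - 1) := by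
  have h := intervalIntegral.integral_comp_neg (a := 0) (b := -t)
    fun z => (-1) ^ n * iteratedDeriv n g z * (z - t) ^ (n - r - 1)
  rw [neg_neg, neg_zero] at h
  simp only [caputoDeriv, riemannLiouvilleIntegral, iteratedDeriv_comp_neg, smul_eq_mul, ← h,
    neg_sub_comm]

theorem caputoDeriv_two_comp_neg (r : ℝ) (g : ℝ → ℝ) (t : ℝ) :
    caputoDeriv 2 r (fun x => g (-x)) (-t) =
      1 / Gamma (2 - r) * ∫ z in t..(0 : ℝ), deriv (deriv g) z * (z - t) ^ (1 - r) := by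
  have hexp : 2 - r - 1 = 1 - r := by ring
  simp only [caputoDeriv_comp_neg, iteratedDeriv_succ, iteratedDeriv_zero, Nat.cast_ofNat,
    even_two.neg_one_pow, one_mul, hexp]

theorem iteratedDeriv_eq_of_forall_hasDerivAt {s : Set ℝ} (hs : IsOpen s) {F : ℕ → ℝ → ℝ}
    (hF : ∀ j, ∀ x ∈ s, HasDerivAt (F j) (F (j + 1) x) x) (j : ℕ) :
    EqOn (iteratedDeriv j (F 0)) (F j) s := by
  induction j with
  | zero => simp [EqOn]
  | succ j ih =>
    intro x hx
    rw [iteratedDeriv_succ, (ih.eventuallyEq_of_mem (hs.mem_nhds hx)).deriv_eq, (hF j x hx).deriv]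

end Caputo

section CaputoSolution

variable {n : ℕ} {r t : ℝ}

/-- The solution of the Cauchy problem `D^r w = l w + f`, `w^(k)(0) = c k` for `k < n`, where `D^r`
is the Caputo derivative of order `r ∈ (n - 1, n)` and `f` is a constant. -/
noncomputable def caputoSolution (r l : ℝ) (c : Fin n → ℝ) (f t : ℝ) : ℝ :=
  ∑ k, c k * mittagLefflerKernel r (k + 1) l t + f * mittagLefflerKernel r (r + 1) l t

theorem caputoSolution_zero (hr : 0 < r) (l : ℝ) (c : Fin (n + 1) → ℝ) (f : ℝ) :
    caputoSolution r l c f 0 = c 0 := by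
  simp [caputoSolution, mittagLefflerKernel_apply_zero hr.ne', hr.ne']

theorem iteratedDeriv_caputoSolution (hr : 0 < r) (l : ℝ) (c : Fin n → ℝ) (f : ℝ) (j : ℕ)
    (ht : 0 < t) :
    iteratedDeriv j (caputoSolution r l c f) t =
      ∑ k, c k * mittagLefflerKernel r (k + 1 - j) l t +
        f * mittagLefflerKernel r (r + 1 - j) l t := by
  let F (j : ℕ) (x : ℝ) : ℝ :=
    ∑ k, c k * mittagLefflerKernel r (k + 1 - j) l x + f * mittagLefflerKernel r (r + 1 - j) l x
  have hF₀ : caputoSolution r l c f = F 0 := by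
    funext x
    simp [caputoSolution, F]
  have hF (j : ℕ) (x : ℝ) (hx : x ∈ Ioi 0) : HasDerivAt (F j) (F (j + 1) x) x := by
    have hkernel (b : ℝ) := hasDerivAt_mittagLefflerKernel hr b l hx
    simp only [F, Nat.cast_succ, ← sub_sub]
    exact (HasDerivAt.fun_sum fun k _ => (hkernel _).const_mul (c k)).add ((hkernel _).const_mul f)
  rw [hF₀]
  exact iteratedDeriv_eq_of_forall_hasDerivAt isOpen_Ioi hF j ht

theorem mittagLefflerKernel_natCast_add_one_sub_natCast (hr : 0 < r) {k j : ℕ} (hkj : k < j)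
    (l : ℝ) (ht : 0 < t) :
    mittagLefflerKernel r (k + 1 - j) l t = l * mittagLefflerKernel r (r + (k + 1 - j)) l t :=
  mittagLefflerKernel_of_Gamma_eq_zero hr (Gamma_natCast_add_one_sub_natCast hkj) l ht

theorem tendsto_mittagLefflerKernel_natCast_add_one_sub_natCast (hr : 0 < r) {k j : ℕ}
    (hj : (j : ℝ) < r + k) (l : ℝ) :
    Tendsto (mittagLefflerKernel r (k + 1 - j) l) (𝓝[>] 0) (𝓝 (if k = j then 1 else 0)) := by
  rcases lt_or_ge k j with hkj | hjk
  · have hb : 1 < r + (k + 1 - j) := by linarith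
    have h := (tendsto_mittagLefflerKernel_zero hr hb.le l).const_mul l
    rw [if_neg hb.ne', mul_zero] at h
    rw [if_neg hkj.ne]
    refine h.congr' ?_
    filter_upwards [self_mem_nhdsWithin] with t ht using
      (mittagLefflerKernel_natCast_add_one_sub_natCast hr hkj l ht).symm
  · have hjk' : (j : ℝ) ≤ k := mod_cast hjk
    have h := tendsto_mittagLefflerKernel_zero hr (b := k + 1 - j) (by linarith) l
    simpa [sub_eq_iff_eq_add, add_comm] using h

theorem tendsto_iteratedDeriv_caputoSolution (hr : (n : ℝ) - 1 < r) (l : ℝ) (c : Fin n → ℝ) (f : ℝ)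
    (j : Fin n) :
    Tendsto (iteratedDeriv j (caputoSolution r l c f)) (𝓝[>] 0) (𝓝 (c j)) := by
  have hjn : (j : ℝ) + 1 ≤ n := mod_cast j.isLt
  have hr₀ : 0 < r := by linarith [j.val.cast_nonneg (α := ℝ)]
  have hdata (k : Fin n) : Tendsto (mittagLefflerKernel r (k + 1 - j) l) (𝓝[>] 0)
      (𝓝 (if k = j then 1 else 0)) := by
    simpa only [Fin.ext_iff] using tendsto_mittagLefflerKernel_natCast_add_one_sub_natCast hr₀
      (by linarith [k.val.cast_nonneg (α := ℝ)]) l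
  have hb : 1 < r + 1 - j := by linarith
  have hforce := tendsto_mittagLefflerKernel_zero hr₀ hb.le l
  rw [if_neg hb.ne'] at hforce
  have h := (tendsto_finsetSum Finset.univ fun k _ => (hdata k).const_mul (c k)).add
    (hforce.const_mul f)
  simp only [mul_ite, mul_one, mul_zero, Finset.sum_ite_eq', Finset.mem_univ, if_true, add_zero]
    at h
  refine h.congr' ?_
  filter_upwards [self_mem_nhdsWithin] with t ht using
    (iteratedDeriv_caputoSolution hr₀ l c f j ht).symm

theorem caputoDeriv_caputoSolution (hr₀ : 0 < r) (hr₁ : (n : ℝ) - 1 < r) (hr₂ : r < n) (l : ℝ)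
    (c : Fin n → ℝ) (f : ℝ) (ht : 0 < t) :
    caputoDeriv n r (caputoSolution r l c f) t = l * caputoSolution r l c f t + f := by
  have hs : 0 < n - r := sub_pos.2 hr₂
  have hb (k : Fin n) : 0 < r + (k + 1 - n) := by linarith [k.val.cast_nonneg (α := ℝ)]
  have hb' : 0 < r + 1 - n := by linarith
  have hderiv : EqOn (iteratedDeriv n (caputoSolution r l c f))
      (fun z => ∑ k : Fin n, c k * l * mittagLefflerKernel r (r + (k + 1 - n)) l z +
        f * mittagLefflerKernel r (r + 1 - n) l z) (Ioo 0 t) := fun z hz => by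
    simp only [iteratedDeriv_caputoSolution hr₀ l c f n hz.1, mul_assoc,
      mittagLefflerKernel_natCast_add_one_sub_natCast hr₀ (Fin.isLt _) l hz.1]
  have hint {b : ℝ} (hb : 0 < b) (C : ℝ) : IntervalIntegrable
      (fun z => C * mittagLefflerKernel r b l z * (t - z) ^ (n - r - 1)) volume 0 t := by
    simpa only [mul_assoc] using
      (intervalIntegrable_mittagLefflerKernel_mul_sub_rpow hr₀ hb hs l ht).const_mul C
  have hint_sum : IntervalIntegrable (fun z => (∑ k : Fin n,
      c k * l * mittagLefflerKernel r (r + (k + 1 - n)) l z) * (t - z) ^ (n - r - 1))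
      volume 0 t := by
    simpa only [Finset.sum_mul, Finset.sum_fn] using
      IntervalIntegrable.sum Finset.univ fun k _ => hint (hb k) (c k * l)
  have hshift (k : Fin n) : r + ((k : ℝ) + 1 - n) + (n - r) = k + 1 := by ring
  have hshift' : r + 1 - n + (n - r) = 1 := by ring
  calc caputoDeriv n r (caputoSolution r l c f) t
      = ∑ k, c k * l * mittagLefflerKernel r (k + 1) l t + f * mittagLefflerKernel r 1 l t := by
        rw [caputoDeriv, riemannLiouvilleIntegral_congr ht hderiv,
          riemannLiouvilleIntegral_add hint_sum (hint hb' f),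
          riemannLiouvilleIntegral_sum fun k _ => hint (hb k) (c k * l)]
        simp only [riemannLiouvilleIntegral_const_mul,
          riemannLiouvilleIntegral_mittagLefflerKernel hr₀ hb' hs l ht,
          riemannLiouvilleIntegral_mittagLefflerKernel hr₀ (hb _) hs l ht, hshift, hshift']
    _ = l * caputoSolution r l c f t + f := by
        simp only [mittagLefflerKernel_one hr₀ l ht, caputoSolution, mul_add, Finset.mul_sum,
          mul_comm (c _) l, mul_assoc]
        ring

variable {l T f : ℝ} {c : Fin n → ℝ} {g : ℝ → ℝ}

theorem caputoDeriv_of_eqOn_caputoSolution (hg : EqOn g (caputoSolution r l c f) (Ioo 0 T))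
    (hr₀ : 0 < r) (hr₁ : (n : ℝ) - 1 < r) (hr₂ : r < n) (ht : t ∈ Ioo 0 T) :
    caputoDeriv n r g t = l * g t + f := by
  rw [caputoDeriv_congr ht.1 (hg.mono (Ioo_subset_Ioo_right ht.2.le)),
    caputoDeriv_caputoSolution hr₀ hr₁ hr₂ l c f ht.1, hg ht]

theorem tendsto_iteratedDeriv_of_eqOn_caputoSolution (hT : 0 < T)
    (hg : EqOn g (caputoSolution r l c f) (Ioo 0 T)) (hr : (n : ℝ) - 1 < r) (j : Fin n) :
    Tendsto (iteratedDeriv j g) (𝓝[>] 0) (𝓝 (c j)) := by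
  refine (tendsto_iteratedDeriv_caputoSolution hr l c f j).congr' ?_
  filter_upwards [Ioo_mem_nhdsGT hT] with t ht using
    (hg.iteratedDeriv_of_isOpen isOpen_Ioo j ht).symm

theorem tendsto_caputoDeriv_of_eqOn_caputoSolution {c : Fin (n + 1) → ℝ} (hT : 0 < T)
    (hg : EqOn g (caputoSolution r l c f) (Ioo 0 T)) (hr₁ : (n : ℝ) < r) (hr₂ : r < n + 1) :
    Tendsto (caputoDeriv (n + 1) r g) (𝓝[>] 0) (𝓝 (l * c 0 + f)) := by
  have hr₀ : 0 < r := n.cast_nonneg.trans_lt hr₁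
  have hr₁' : ((n + 1 : ℕ) : ℝ) - 1 < r := by simpa using hr₁
  have hg₀ := tendsto_iteratedDeriv_of_eqOn_caputoSolution hT hg hr₁' 0
  simp only [Fin.val_zero, iteratedDeriv_zero] at hg₀
  refine ((hg₀.const_mul l).add_const f).congr' ?_
  filter_upwards [Ioo_mem_nhdsGT hT] with t ht using
    (caputoDeriv_of_eqOn_caputoSolution hg hr₀ hr₁' (mod_cast hr₂) ht).symm

theorem tendsto_neg_deriv_of_comp_neg_eqOn_caputoSolution {c : Fin (n + 2) → ℝ} (hT : 0 < T)
    (hg : EqOn (fun t => g (-t)) (caputoSolution r l c f) (Ioo 0 T)) (hr : (n : ℝ) + 1 < r) :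
    Tendsto (fun t => -deriv g t) (𝓝[<] 0) (𝓝 (c 1)) := by
  have hneg : Tendsto Neg.neg (𝓝[<] (0 : ℝ)) (𝓝[>] 0) := by
    simpa using tendsto_neg_nhdsLT (a := (0 : ℝ))
  have h := (tendsto_iteratedDeriv_of_eqOn_caputoSolution hT hg (by push_cast; linarith) 1).comp
    hneg
  simpa [Function.comp_def, deriv_comp_neg] using h

end CaputoSolution

section TransmissionProblem

theorem caputoSolution_one (α l a f t : ℝ) :
    caputoSolution α l ![a] f t =
      a * mittagLeffler α 1 (l * t ^ α) + f * t ^ α * mittagLeffler α (α + 1) (l * t ^ α) := by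
  simp [caputoSolution, mittagLefflerKernel, mul_assoc]

theorem caputoSolution_two (β l a c f t : ℝ) :
    caputoSolution β l ![a, c] f t =
      a * mittagLeffler β 1 (l * t ^ β) + t * c * mittagLeffler β 2 (l * t ^ β) +
        f * t ^ β * mittagLeffler β (β + 1) (l * t ^ β) := by
  simp only [caputoSolution, mittagLefflerKernel, Fin.sum_univ_two, Fin.val_zero, Fin.val_one,
    Nat.cast_zero, Nat.cast_one, add_sub_cancel_right, zero_add, rpow_zero, rpow_one,
    Matrix.cons_val_zero, Matrix.cons_val_one]
  rw [one_add_one_eq_two]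
  ring

theorem nontrivial_mth_mode_general {α β p q : ℝ} (hα0 : 0 < α) (hα1 : α < 1) (hβ1 : 1 < β)
    (hβ2 : β < 2) (hp : 0 < p) (hq : 0 < q) {μ : ℝ}
    (hΔ : p ^ β * mittagLeffler β (β + 1) (-μ * p ^ β) + p * mittagLeffler β 2 (-μ * p ^ β)
      - q ^ α * mittagLeffler α (α + 1) (-μ * q ^ α) = 0)
    {c f₂ a : ℝ} (hf₂ : f₂ = c * mittagLeffler α 1 (-μ * q ^ α))
    (ha : a = -c * q ^ α * mittagLeffler α (α + 1) (-μ * q ^ α)) {V W : ℝ → ℝ}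
    (hV : ∀ t ∈ Icc 0 q, V t =
      a * mittagLeffler α 1 (-μ * t ^ α) + f₂ * t ^ α * mittagLeffler α (α + 1) (-μ * t ^ α))
    (hW : ∀ t ∈ Icc (-p) 0, W t =
      a * mittagLeffler β 1 (-μ * (-t) ^ β) - t * c * mittagLeffler β 2 (-μ * (-t) ^ β)
        + f₂ * (-t) ^ β * mittagLeffler β (β + 1) (-μ * (-t) ^ β)) :
    (∀ t ∈ Ioo 0 q,
      (1 / Gamma (1 - α)) * (∫ z in (0 : ℝ)..t, deriv V z * (t - z) ^ (-α)) + μ * V t = f₂) ∧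
    (∀ t ∈ Ioo (-p) 0,
      (1 / Gamma (2 - β)) * (∫ z in t..(0 : ℝ), deriv (deriv W) z * (z - t) ^ (1 - β))
        + μ * W t = f₂) ∧
    V 0 = W 0 ∧ V q = 0 ∧ W (-p) = 0 ∧
    Tendsto (fun t => (1 / Gamma (1 - α)) * ∫ z in (0 : ℝ)..t, deriv V z * (t - z) ^ (-α))
      (𝓝[>] 0) (𝓝 c) ∧
    Tendsto (fun t => -deriv W t) (𝓝[<] 0) (𝓝 c) := by
  have hβ0 : 0 < β := by linarith
  have hV_sol : EqOn V (caputoSolution α (-μ) ![a] f₂) (Icc 0 q) := fun t ht => by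
    rw [hV t ht, caputoSolution_one]
  have hW_sol : EqOn (fun t => W (-t)) (caputoSolution β (-μ) ![a, c] f₂) (Icc 0 p) :=
    fun t ht => by
      simp only [hW (-t) ⟨neg_le_neg ht.2, neg_nonpos.2 ht.1⟩, caputoSolution_two, neg_neg]
      ring
  have hV_open := hV_sol.mono Ioo_subset_Icc_self
  have hW_open := hW_sol.mono Ioo_subset_Icc_self
  have hflux : -μ * a + f₂ = c := by
    rw [hf₂, ha, mittagLeffler_one hα0]
    ring
  have hV₀ : V 0 = a := by
    simpa [caputoSolution_zero hα0] using hV_sol (left_mem_Icc.2 hq.le)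
  have hW₀ : W 0 = a := by
    simpa [caputoSolution_zero hβ0] using hW_sol (left_mem_Icc.2 hp.le)
  have hVq : V q = 0 := by
    rw [hV q (right_mem_Icc.2 hq.le), ha, hf₂]
    ring
  have hWp : W (-p) = 0 := by
    rw [hW (-p) (left_mem_Icc.2 (neg_nonpos.2 hp.le)), neg_neg, mittagLeffler_one hβ0]
    linear_combination ha + c * hΔ + p ^ β * mittagLeffler β (β + 1) (-μ * p ^ β) * hflux
  refine ⟨fun t ht => ?_, fun t ht => ?_, hV₀.trans hW₀.symm, hVq, hWp, ?_,
    tendsto_neg_deriv_of_comp_neg_eqOn_caputoSolution (n := 0) hp hW_open (by simpa)⟩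
  · rw [← caputoDeriv_one, caputoDeriv_of_eqOn_caputoSolution hV_open hα0 (by simpa) (by simpa) ht]
    ring
  · have ht' : -t ∈ Ioo 0 p := ⟨neg_pos.2 ht.2, neg_lt.1 ht.1⟩
    rw [← caputoDeriv_two_comp_neg, caputoDeriv_of_eqOn_caputoSolution hW_open hβ0
      (by norm_num; linarith) (by simpa) ht', neg_neg]
    ring
  · have h : Tendsto (caputoDeriv 1 α V) (𝓝[>] 0) (𝓝 (-μ * a + f₂)) :=
      tendsto_caputoDeriv_of_eqOn_caputoSolution (n := 0) hq hV_open (by simpa) (by simpa)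
    simpa only [← caputoDeriv_one, hflux] using h

end TransmissionProblem

/-- Nontrivial m-th sine-mode solution when `Δ_m = 0`: with `μ = (2mπ)²`, `c ≠ 0`,
`f₂ = c E_{α,1}(−μ q^α)`, `a = −c q^α E_{α,α+1}(−μ q^α)`,
`V(t) = a E_{α,1}(−μ t^α) + f₂ t^α E_{α,α+1}(−μ t^α)` and
`W(t) = a E_{β,1}(−μ(−t)^β) − t c E_{β,2}(−μ(−t)^β) + f₂(−t)^β E_{β,β+1}(−μ(−t)^β)`,
the pair `(V, W)` solves the m-th mode transmission problem nontrivially. -/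
theorem nontrivial_mth_mode (α β p q : ℝ)
    (hα0 : 0 < α) (hα1 : α < 1) (hβ1 : 1 < β) (hβ2 : β < 2) (hp : 0 < p) (hq : 0 < q)
    (m : ℕ) (hm : 1 ≤ m) (μ : ℝ) (hμ : μ = (2 * m * π) ^ 2)
    (hΔm : p ^ β * mittagLeffler β (β + 1) (-μ * p ^ β)
        + p * mittagLeffler β 2 (-μ * p ^ β)
        - q ^ α * mittagLeffler α (α + 1) (-μ * q ^ α) = 0)
    (c : ℝ) (hc : c ≠ 0) (f₂ a : ℝ)
    (hf₂ : f₂ = c * mittagLeffler α 1 (-μ * q ^ α))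
    (ha : a = -c * q ^ α * mittagLeffler α (α + 1) (-μ * q ^ α))
    (V W : ℝ → ℝ)
    (hV : ∀ t : ℝ, V t =
      a * mittagLeffler α 1 (-μ * t ^ α) + f₂ * t ^ α * mittagLeffler α (α + 1) (-μ * t ^ α))
    (hW : ∀ t : ℝ, W t =
      a * mittagLeffler β 1 (-μ * (-t) ^ β) - t * c * mittagLeffler β 2 (-μ * (-t) ^ β)
        + f₂ * (-t) ^ β * mittagLeffler β (β + 1) (-μ * (-t) ^ β)) :
    -- (i) the forward fractional ODE on (0,q)
    (∀ t ∈ Set.Ioo (0:ℝ) q,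
      (1 / Real.Gamma (1 - α)) * (∫ z in (0:ℝ)..t, deriv V z * (t - z) ^ (-α))
        + μ * V t = f₂) ∧
    -- (ii) the backward fractional ODE on (−p,0)
    (∀ t ∈ Set.Ioo (-p) (0:ℝ),
      (1 / Real.Gamma (2 - β)) * (∫ z in t..(0:ℝ), deriv (deriv W) z * (z - t) ^ (1 - β))
        + μ * W t = f₂) ∧
    -- (iii) matching
    V 0 = W 0 ∧
    -- (iv) boundary conditions
    V q = 0 ∧ W (-p) = 0 ∧
    -- (v) the transmitting condition, with common value c
    Filter.Tendsto
      (fun t => (1 / Real.Gamma (1 - α)) * ∫ z in (0:ℝ)..t, deriv V z * (t - z) ^ (-α))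
      (nhdsWithin 0 (Set.Ioi 0)) (nhds c) ∧
    Filter.Tendsto (fun t => -(deriv W t)) (nhdsWithin 0 (Set.Iio 0)) (nhds c) := by
  exact nontrivial_mth_mode_general hα0 hα1 hβ1 hβ2 hp hq hΔm hf₂ ha
    (fun t _ => hV t) (fun t _ => hW t)
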